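/- arXiv:2104.06208 — 5 statements merged into one kernel-verified Lean document; each statement's English description precedes it below -/
import Mathlib

section
/- For every real N > 1 there exists ε(N) > 0 with the following property. Let (X,d) be a metric space equipped with a Borel measure m that is positive and finite on all metric balls, let λ > 0, and suppose the Bishop–Gromov inequality holds: for every z ∈ X and all 0 < r ≤ R one has m(B_R(z)) · ∫₀^r sinh(λs)^{N−1} ds ≤ m(B_r(z)) · ∫₀^R sinh(λs)^{N−1} ds. Let D > 0 satisfy (N−1)·λ²·D² ≤ ε(N), let x̄ ∈ X, let b ∈ ℕ, and let γ₁,…,γ_b be isometries of X preserving m (each pushes m forward to m) that generate a subgroup Γ' which is free abelian with basis γ₁,…,γ_b, such that d(γ·x̄, x̄) > D for every nontrivial γ ∈ Γ' and d(γᵢ·x̄, x̄) ≤ 2D for each i. Then b ≤ ⌊N⌋. -/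
open MeasureTheory Metric

/-! Suppose `b > ⌊N⌋` and put `p = ⌊N⌋ + 1 > N`. The words in the first `p` generators with
exponents in `{0, …, L - 1}` give `L ^ p` distinct elements of `Γ'`. Their translates of the ball
of radius `D / 2` at `x̄` are disjoint, because nontrivial elements move `x̄` by more than `D`; they
have equal mass, because `Γ'` preserves `m`; and they lie in the ball of radius `3 p L D`, because
generators move `x̄` by at most `2 D`. So the latter ball has at least `L ^ p` times the mass of the
ball of radius `D / 2` (`packing`).

If `3 p L λ D ≤ 1`, then `t ≤ sinh t ≤ 2 t` on the relevant range, and Bishop–Gromov bounds the same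
ratio by `2 ^ (N - 1) * (6 p L) ^ N` (`volume_ratio`). As `p > N`, some `L` depending only on `N`
violates `L ^ p ≤ 2 ^ (N - 1) * (6 p L) ^ N` (`exists_scale`), and `ε` is chosen so that the
smallness hypothesis gives `3 p L λ D ≤ 1` for this `L`. -/

lemma sinh_le_two_mul {x : ℝ} (h0 : 0 ≤ x) (h1 : x ≤ 1) : Real.sinh x ≤ 2 * x := by
  have h := Real.abs_exp_sub_one_le (x := x) (by rw [abs_of_nonneg h0]; exact h1)
  rw [abs_of_nonneg h0] at h
  have h2 := le_of_abs_le h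
  have h3 := Real.add_one_le_exp (-x)
  rw [Real.sinh_eq]
  linarith

lemma integral_const_mul_rpow {N : ℝ} (hN : 1 < N) {c R : ℝ} (hc : 0 ≤ c) (hR : 0 ≤ R) :
    ∫ s in (0:ℝ)..R, (c * s) ^ (N - 1) = c ^ (N - 1) * (R ^ N / N) := by
  have h : ∫ s in (0:ℝ)..R, (c * s) ^ (N - 1) = ∫ s in (0:ℝ)..R, c ^ (N - 1) * s ^ (N - 1) := by
    apply intervalIntegral.integral_congr
    intro s hs
    rw [Set.uIcc_of_le hR] at hs
    exact Real.mul_rpow hc hs.1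
  rw [h, intervalIntegral.integral_const_mul, integral_rpow (Or.inl (by linarith)),
    sub_add_cancel, Real.zero_rpow (by linarith), sub_zero]

/-- Up to the factor `2 ^ (N - 1)`, the model volumes of radius at most `1 / lam` grow no faster
than in `N`-dimensional Euclidean space. -/
lemma volume_ratio {N : ℝ} (hN : 1 < N) {lam r R : ℝ} (hlam : 0 < lam) (hr : 0 < r) (hrR : r ≤ R)
    (hR : lam * R ≤ 1) :
    0 < ∫ s in (0:ℝ)..r, Real.sinh (lam * s) ^ (N - 1) ∧
    ∫ s in (0:ℝ)..R, Real.sinh (lam * s) ^ (N - 1) ≤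
      2 ^ (N - 1) * (R / r) ^ N * ∫ s in (0:ℝ)..r, Real.sinh (lam * s) ^ (N - 1) := by
  have hR0 : 0 < R := hr.trans_le hrR
  have hN1 : 0 ≤ N - 1 := by linarith
  have hcs : Continuous fun s : ℝ => Real.sinh (lam * s) ^ (N - 1) :=
    (Real.continuous_sinh.comp (continuous_const.mul continuous_id)).rpow_const
      fun _ => Or.inr hN1
  have hcl : ∀ c : ℝ, Continuous fun s : ℝ => (c * s) ^ (N - 1) := fun c =>
    (continuous_const.mul continuous_id).rpow_const fun _ => Or.inr hN1
  have low : lam ^ (N - 1) * (r ^ N / N) ≤ ∫ s in (0:ℝ)..r, Real.sinh (lam * s) ^ (N - 1) := by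
    rw [← integral_const_mul_rpow hN hlam.le hr.le]
    refine intervalIntegral.integral_mono_on hr.le ((hcl _).intervalIntegrable _ _)
      (hcs.intervalIntegrable _ _) fun s hs => ?_
    have h0 : 0 ≤ lam * s := mul_nonneg hlam.le hs.1
    exact Real.rpow_le_rpow h0 (Real.self_le_sinh_iff.2 h0) hN1
  have upp : ∫ s in (0:ℝ)..R, Real.sinh (lam * s) ^ (N - 1) ≤ (2 * lam) ^ (N - 1) * (R ^ N / N) := by
    rw [← integral_const_mul_rpow hN (by positivity) hR0.le]
    refine intervalIntegral.integral_mono_on hR0.le (hcs.intervalIntegrable _ _)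
      ((hcl _).intervalIntegrable _ _) fun s hs => ?_
    have h0 : 0 ≤ lam * s := mul_nonneg hlam.le hs.1
    have h1 : lam * s ≤ 1 := (mul_le_mul_of_nonneg_left hs.2 hlam.le).trans hR
    rw [mul_assoc]
    exact Real.rpow_le_rpow (Real.sinh_nonneg_iff.2 h0) (sinh_le_two_mul h0 h1) hN1
  have hlow0 : 0 < lam ^ (N - 1) * (r ^ N / N) := by positivity
  refine ⟨hlow0.trans_le low, upp.trans ?_⟩
  calc (2 * lam) ^ (N - 1) * (R ^ N / N)
      = 2 ^ (N - 1) * (R / r) ^ N * (lam ^ (N - 1) * (r ^ N / N)) := by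
        rw [Real.mul_rpow zero_le_two hlam.le, Real.div_rpow hR0.le hr.le]
        have : r ^ N ≠ 0 := by positivity
        field_simp
    _ ≤ _ := mul_le_mul_of_nonneg_left low (by positivity)

lemma exists_scale {N : ℝ} {p : ℕ} (hp : N < p) :
    ∃ L : ℕ, 0 < L ∧ 2 ^ (N - 1) * (6 * p * L : ℝ) ^ N < (L : ℝ) ^ p := by
  have ht : Filter.Tendsto (fun L : ℕ => (L : ℝ) ^ ((p : ℝ) - N)) Filter.atTop Filter.atTop :=
    (tendsto_rpow_atTop (sub_pos.2 hp)).comp tendsto_natCast_atTop_atTop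
  obtain ⟨L, hL, hL0⟩ := ((ht.eventually_gt_atTop (2 ^ (N - 1) * (6 * p : ℝ) ^ N)).and
    (Filter.eventually_gt_atTop 0)).exists
  refine ⟨L, hL0, ?_⟩
  have hL' : (0 : ℝ) < L := Nat.cast_pos.2 hL0
  rw [Real.mul_rpow (by positivity) hL'.le, ← mul_assoc]
  calc _ < (L : ℝ) ^ ((p : ℝ) - N) * (L : ℝ) ^ N :=
        mul_lt_mul_of_pos_right hL (Real.rpow_pos_of_pos hL' _)
    _ = (L : ℝ) ^ p := by rw [← Real.rpow_add hL', sub_add_cancel, Real.rpow_natCast]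

section Isometries

variable {X : Type*} [MetricSpace X]

lemma dist_mul_apply_le (g h : X ≃ᵢ X) (x : X) :
    dist ((g * h) x) x ≤ dist (g x) x + dist (h x) x := by
  calc dist ((g * h) x) x ≤ dist (g (h x)) (g x) + dist (g x) x := dist_triangle _ _ _
    _ = dist (g x) x + dist (h x) x := by rw [g.isometry.dist_eq, add_comm]

lemma dist_pow_apply_le (g : X ≃ᵢ X) (x : X) (n : ℕ) :
    dist ((g ^ n) x) x ≤ n * dist (g x) x := by
  induction n with
  | zero => simp
  | succ n ih =>
    rw [pow_succ]
    refine (dist_mul_apply_le _ _ _).trans ?_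
    push_cast
    linarith

lemma dist_ofFn_prod_apply_le (x : X) {b : ℕ} (f : Fin b → X ≃ᵢ X) :
    dist ((List.ofFn f).prod x) x ≤ ∑ i, dist (f i x) x := by
  induction b with
  | zero => simp
  | succ b ih =>
    rw [List.ofFn_succ, List.prod_cons, Fin.sum_univ_succ]
    exact (dist_mul_apply_le _ _ _).trans (add_le_add_right (ih _) _)

lemma map_eq_of_mem_closure [MeasurableSpace X] [BorelSpace X] {m : Measure X}
    {S : Set (X ≃ᵢ X)} (hS : ∀ g ∈ S, Measure.map g m = m) {g : X ≃ᵢ X}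
    (hg : g ∈ Subgroup.closure S) : Measure.map g m = m := by
  induction hg using Subgroup.closure_induction with
  | mem g hg => exact hS g hg
  | one => exact Measure.map_id
  | mul g h _ _ hg hh =>
    have := Measure.map_map (μ := m) g.continuous.measurable h.continuous.measurable
    rw [hh, hg] at this
    exact this.symm
  | inv g _ hg =>
    have := Measure.map_map (μ := m) g⁻¹.continuous.measurable g.continuous.measurable
    rw [hg] at this
    rw [this]
    have h2 : (⇑g⁻¹ ∘ ⇑g) = id := by
      funext x
      exact g.symm_apply_apply x
    rw [h2, Measure.map_id]

/-- The exponent vector supported on the first `p` of `b` coordinates, where it is `k`. -/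
def extendExp {p L : ℕ} (b : ℕ) (k : Fin p → Fin L) (i : Fin b) : ℕ :=
  if h : (i : ℕ) < p then (k ⟨i, h⟩ : ℕ) else 0

lemma extendExp_injective {p L b : ℕ} (hpb : p ≤ b) :
    Function.Injective (extendExp b : (Fin p → Fin L) → Fin b → ℕ) := by
  intro k k' h
  funext i
  have := congrFun h (Fin.castLE hpb i)
  simpa [extendExp, Fin.ext_iff] using this

lemma sum_extendExp_le {p L b : ℕ} (hpb : p ≤ b) (k : Fin p → Fin L) :
    ∑ i, extendExp b k i ≤ p * L := by
  obtain ⟨c, rfl⟩ := Nat.exists_eq_add_of_le hpb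
  rw [Fin.sum_univ_add]
  have h1 : ∀ i : Fin p, extendExp (p + c) k (Fin.castAdd c i) = k i := by
    intro i
    simp [extendExp]
  have h2 : ∀ i : Fin c, extendExp (p + c) k (Fin.natAdd p i) = 0 := by
    intro i
    simp [extendExp]
  simp only [h1, h2, Finset.sum_const_zero, add_zero]
  calc ∑ i, (k i : ℕ) ≤ ∑ _i : Fin p, L := Finset.sum_le_sum fun i _ => (k i).2.le
    _ = p * L := by simp

/-- Words of exponents below `L` in the first `p` generators move the ball of radius `D / 2` to
`L ^ p` disjoint balls of equal mass inside the ball of radius `3 p L D`. -/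
lemma packing [MeasurableSpace X] [BorelSpace X] (m : Measure X) {D : ℝ} (hD : 0 < D) (xb : X)
    {b p L : ℕ} (hp : 0 < p) (hL : 0 < L) (hpb : p ≤ b) (γ : Fin b → X ≃ᵢ X)
    (hmp : ∀ i, Measure.map (γ i) m = m)
    (hbasis : ∀ g ∈ Subgroup.closure (Set.range γ),
      ∃! l : Fin b → ℤ, (List.ofFn fun i => γ i ^ l i).prod = g)
    (hlow : ∀ g ∈ Subgroup.closure (Set.range γ), g ≠ 1 → D < dist (g xb) xb)
    (hupp : ∀ i, dist (γ i xb) xb ≤ 2 * D) :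
    (L : ENNReal) ^ p * m (ball xb (D / 2)) ≤ m (ball xb (D * (3 * p * L))) := by
  let w : (Fin p → Fin L) → (X ≃ᵢ X) := fun k => (List.ofFn fun i => γ i ^ extendExp b k i).prod
  have hwmem : ∀ k, w k ∈ Subgroup.closure (Set.range γ) := by
    intro k
    refine Subgroup.list_prod_mem _ fun g hg => ?_
    obtain ⟨i, rfl⟩ := (List.mem_ofFn' _ _).1 hg
    exact Subgroup.pow_mem _ (Subgroup.subset_closure (Set.mem_range_self i)) _
  have hwinj : Function.Injective w := by
    intro k k' hk
    obtain ⟨l, -, hl⟩ := hbasis _ (hwmem k)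
    have h1 := hl (fun i => (extendExp b k i : ℤ)) (by simp only [zpow_natCast]; rfl)
    have h2 := hl (fun i => (extendExp b k' i : ℤ)) (by simp only [zpow_natCast]; exact hk.symm)
    apply extendExp_injective hpb
    funext i
    exact_mod_cast congrFun (h1.trans h2.symm) i
  have hmass : ∀ k, m (ball (w k xb) (D / 2)) = m (ball xb (D / 2)) := by
    intro k
    have hmap : Measure.map (w k) m = m :=
      map_eq_of_mem_closure (by rintro _ ⟨i, rfl⟩; exact hmp i) (hwmem k)
    conv_lhs => rw [← hmap]
    rw [Measure.map_apply (w k).continuous.measurable measurableSet_ball,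
      (w k).preimage_ball, IsometryEquiv.symm_apply_apply]
  have hdisj : Pairwise (Function.onFun Disjoint fun k => ball (w k xb) (D / 2)) := by
    intro k k' hne
    apply ball_disjoint_ball
    have h := hlow ((w k')⁻¹ * w k) (Subgroup.mul_mem _ (Subgroup.inv_mem _ (hwmem k')) (hwmem k))
      (fun h => hne (hwinj (inv_mul_eq_one.1 h).symm))
    have h2 : dist (((w k')⁻¹ * w k) xb) xb = dist (w k xb) (w k' xb) := by
      rw [← (w k').isometry.dist_eq, ← IsometryEquiv.mul_apply, mul_inv_cancel_left]
    rw [h2] at h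
    linarith
  have hdist : ∀ k, dist (w k xb) xb ≤ 2 * D * (p * L) := by
    intro k
    have hs : (∑ i, (extendExp b k i : ℝ)) ≤ p * L := by exact_mod_cast sum_extendExp_le hpb k
    calc dist (w k xb) xb ≤ ∑ i, dist ((γ i ^ extendExp b k i) xb) xb :=
          dist_ofFn_prod_apply_le _ _
      _ ≤ ∑ i, 2 * D * (extendExp b k i : ℝ) := Finset.sum_le_sum fun i _ => by
          refine (dist_pow_apply_le _ _ _).trans ?_
          rw [mul_comm]
          exact mul_le_mul_of_nonneg_right (hupp i) (Nat.cast_nonneg _)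
      _ = 2 * D * ∑ i, (extendExp b k i : ℝ) := by rw [Finset.mul_sum]
      _ ≤ 2 * D * (p * L) := mul_le_mul_of_nonneg_left hs (by positivity)
  have hsub : (⋃ k, ball (w k xb) (D / 2)) ⊆ ball xb (D * (3 * p * L)) := by
    refine Set.iUnion_subset fun k => ball_subset_ball' ?_
    have hpL : (1 : ℝ) ≤ p * L := by exact_mod_cast Nat.mul_pos hp hL
    nlinarith [hdist k, mul_le_mul_of_nonneg_left hpL hD.le]
  calc (L : ENNReal) ^ p * m (ball xb (D / 2))
      = ∑ k : Fin p → Fin L, m (ball (w k xb) (D / 2)) := by simp [hmass]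
    _ = m (⋃ k, ball (w k xb) (D / 2)) := by
        rw [measure_iUnion hdisj fun _ => measurableSet_ball, tsum_fintype]
    _ ≤ _ := measure_mono hsub

end Isometries

/-- **Gromov–Gallot upper bound on the rank of a short free-abelian isometry group.**
For every real `N > 1` there exists `ε(N) > 0` such that: whenever `(X, d, m)` is a metric
space with a Borel measure `m` positive and finite on balls satisfying the Bishop–Gromov
comparison with parameter `λ > 0` and exponent `N - 1`, `D > 0` satisfies
`(N-1)·λ²·D² ≤ ε`, and `γ₁, …, γ_b` are `m`-preserving isometries generating a free abelian
subgroup `Γ'` with basis `γ₁, …, γ_b`, displacement `> D` at `x̄` for nontrivial elements and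
`≤ 2D` for the generators, then `b ≤ ⌊N⌋`. -/
theorem betti_upper_bound :
    ∀ N : ℝ, 1 < N → ∃ ε : ℝ, 0 < ε ∧
      ∀ (X : Type*) [MetricSpace X] [MeasurableSpace X] [BorelSpace X]
        (m : Measure X)
        (_hpos : ∀ (z : X) (r : ℝ), 0 < r → 0 < m (ball z r))
        (_hfin : ∀ (z : X) (r : ℝ), 0 < r → m (ball z r) < ⊤)
        (lam : ℝ) (_hlam : 0 < lam)
        (_hBG : ∀ (z : X) (r R : ℝ), 0 < r → r ≤ R →
          m (ball z R) * ENNReal.ofReal (∫ s in (0:ℝ)..r, Real.sinh (lam * s) ^ (N - 1)) ≤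
            m (ball z r) * ENNReal.ofReal (∫ s in (0:ℝ)..R, Real.sinh (lam * s) ^ (N - 1)))
        (D : ℝ) (_hD : 0 < D) (_hDe : (N - 1) * lam ^ 2 * D ^ 2 ≤ ε)
        (xb : X) (b : ℕ) (γ : Fin b → X ≃ᵢ X)
        (_hmp : ∀ i, Measure.map (γ i) m = m)
        (Γ' : Subgroup (X ≃ᵢ X)) (_hΓ' : Γ' = Subgroup.closure (Set.range γ))
        (_hbasis : ∀ g ∈ Γ', ∃! l : Fin b → ℤ, (List.ofFn fun i => γ i ^ l i).prod = g)
        (_hlow : ∀ g ∈ Γ', g ≠ 1 → D < dist (g xb) xb)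
        (_hupp : ∀ i, dist (γ i xb) xb ≤ 2 * D),
        (b : ℤ) ≤ ⌊N⌋ := by
  intro N hN
  have hN1 : 0 < N - 1 := by linarith
  set p : ℕ := ⌊N⌋₊ + 1 with hp
  have hpN : N < p := by
    rw [hp]
    push_cast
    exact Nat.lt_floor_add_one N
  have hp0 : 0 < p := Nat.succ_pos _
  obtain ⟨L, hL, hLbig⟩ := exists_scale hpN
  have hpL : (1 : ℝ) ≤ p * L := by exact_mod_cast Nat.mul_pos hp0 hL
  have hK : (0 : ℝ) < 3 * p * L := by linarith
  refine ⟨(N - 1) / (3 * p * L) ^ 2, by positivity, ?_⟩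
  intro X _ _ _ m hpos hfin lam hlam hBG D hD hDe xb b γ hmp Γ' hΓ' hbasis hlow hupp
  subst hΓ'
  by_contra hb
  have hpb : p ≤ b := by
    have h : N < b := by exact_mod_cast Int.floor_lt.1 (not_le.1 hb)
    exact (Nat.floor_lt (by linarith)).2 h
  have hpack := packing m hD xb hp0 hL hpb γ hmp hbasis hlow hupp
  have hsmall : lam * (D * (3 * p * L)) ≤ 1 := by
    rw [le_div_iff₀ (by positivity)] at hDe
    have h1 : (N - 1) * (lam * (D * (3 * p * L))) ^ 2 ≤ (N - 1) * 1 := by linarith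
    have h2 := le_of_mul_le_mul_left h1 hN1
    exact (sq_le_one_iff₀ (by positivity)).1 h2
  have hrR : D / 2 ≤ D * (3 * p * L) := by nlinarith
  obtain ⟨hV0, hV⟩ := volume_ratio hN hlam (half_pos hD) hrR hsmall
  have hratio : D * (3 * p * L) / (D / 2) = 6 * p * L := by
    field_simp
    ring
  rw [hratio] at hV
  have hbg := hBG xb (D / 2) (D * (3 * p * L)) (half_pos hD) hrR
  set V := ∫ s in (0:ℝ)..(D / 2), Real.sinh (lam * s) ^ (N - 1)
  set W := ∫ s in (0:ℝ)..(D * (3 * p * L)), Real.sinh (lam * s) ^ (N - 1)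
  set M := m (ball xb (D / 2))
  have hM0 : M ≠ 0 := (hpos xb _ (half_pos hD)).ne'
  have hMt : M ≠ ⊤ := (hfin xb _ (half_pos hD)).ne
  have h1 : M * ((L : ENNReal) ^ p * ENNReal.ofReal V) ≤ M * ENNReal.ofReal W := by
    calc M * ((L : ENNReal) ^ p * ENNReal.ofReal V)
        = (L : ENNReal) ^ p * M * ENNReal.ofReal V := by ring
      _ ≤ _ := (mul_le_mul_left hpack _).trans hbg
  rw [ENNReal.mul_le_mul_iff_right hM0 hMt, ← ENNReal.ofReal_natCast,
    ← ENNReal.ofReal_pow (Nat.cast_nonneg _), ← ENNReal.ofReal_mul (by positivity)] at h1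
  have hLV : 0 < (L : ℝ) ^ p * V := by positivity
  have h2 : (L : ℝ) ^ p * V ≤ W := (ENNReal.ofReal_le_ofReal_iff'.1 h1).resolve_right hLV.not_ge
  exact absurd (le_of_mul_le_mul_right (h2.trans hV) hV0) hLbig.not_ge
end

section
/- Let (X,d) be a metric space equipped with a Borel measure m, let λ > 0 and N > 1 be reals, and suppose the Bishop–Gromov inequality holds: for every z ∈ X and all 0 < r ≤ R one has m(B_R(z)) · ∫₀^r sinh(λs)^{N−1} ds ≤ m(B_r(z)) · ∫₀^R sinh(λs)^{N−1} ds, with m finite and positive on balls. Let D > 0, x̄ ∈ X, b ∈ ℕ, and let γ₁,…,γ_b be m-preserving isometries of X generating a subgroup Γ' which is free abelian with basis γ₁,…,γ_b, such that d(γ·x̄, x̄) > D for every nontrivial γ ∈ Γ' and d(γᵢ·x̄, x̄) ≤ 2D for each i. Then for every natural number r: (2r+1)^b · ∫₀^{D/2} sinh(λs)^{N−1} ds ≤ ∫₀^{(2br+1/2)D} sinh(λs)^{N−1} ds. -/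
open MeasureTheory Metric

/-!
The points `g_l x̄`, with `g_l = γ₁ ^ l₁ ⋯ γ_b ^ l_b` and `|lᵢ| ≤ r`, are pairwise more than `D`
apart: for `l ≠ l'`, uniqueness of exponents makes `g_l'⁻¹ g_l` a nontrivial element of `Γ'`. Hence
their `D / 2`-balls are disjoint. These `(2r+1)^b` balls all have the measure of the `D / 2`-ball
around `x̄` (`measure_ball_of_mem_closure`), and they lie in the ball of radius `(2br + 1/2) D`
around `x̄`, because displacement is subadditive along products (`dist_prod_le`, `dist_zpow_le`).
Comparing measures and dividing the Bishop–Gromov inequality by the measure of the small ball gives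
the claim.
-/

/-- Displacement is subadditive along products of isometries. -/
lemma dist_prod_le {X : Type*} [MetricSpace X] (x : X) (c : ℝ) (L : List (X ≃ᵢ X))
    (h : ∀ g ∈ L, dist (g x) x ≤ c) : dist (L.prod x) x ≤ L.length * c := by
  induction L with
  | nil => simp
  | cons g L ih =>
    have h1 := h g (by simp)
    have h2 := ih fun g' hg' => h g' (by simp [hg'])
    have h3 := dist_triangle (g (L.prod x)) (g x) x
    rw [g.dist_eq] at h3
    rw [List.prod_cons, IsometryEquiv.mul_apply, List.length_cons]
    push_cast
    linarith

lemma dist_pow_le {X : Type*} [MetricSpace X] (x : X) (c : ℝ) (g : X ≃ᵢ X)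
    (h : dist (g x) x ≤ c) (n : ℕ) : dist ((g ^ n) x) x ≤ n * c := by
  have := dist_prod_le x c (List.replicate n g) (fun g' hg' => by
    rw [List.eq_of_mem_replicate hg']; exact h)
  simpa using this

lemma dist_inv_apply {X : Type*} [MetricSpace X] (x : X) (g : X ≃ᵢ X) :
    dist (g⁻¹ x) x = dist (g x) x := by
  rw [← g.dist_eq, IsometryEquiv.apply_inv_self, dist_comm]

lemma dist_zpow_le {X : Type*} [MetricSpace X] (x : X) (c : ℝ) (hc : 0 ≤ c) (g : X ≃ᵢ X)
    (h : dist (g x) x ≤ c) (r : ℕ) (n : ℤ) (hn : n ∈ Finset.Icc (-(r : ℤ)) r) :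
    dist ((g ^ n) x) x ≤ r * c := by
  rw [Finset.mem_Icc] at hn
  have key : ∀ k : ℕ, k ≤ r → dist ((g ^ k) x) x ≤ r * c := fun k hk =>
    (dist_pow_le x c g h k).trans (by gcongr)
  obtain ⟨k, rfl | rfl⟩ := n.eq_nat_or_neg
  · rw [zpow_natCast]
    exact key k (by omega)
  · rw [zpow_neg, zpow_natCast, dist_inv_apply]
    exact key k (by omega)

lemma measure_ball_of_mem_closure {X : Type*} [MetricSpace X] [MeasurableSpace X] [BorelSpace X]
    (m : Measure X) (S : Set (X ≃ᵢ X)) (hS : ∀ g ∈ S, Measure.map g m = m)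
    (g : X ≃ᵢ X) (hg : g ∈ Subgroup.closure S) :
    ∀ (z : X) (ρ : ℝ), m (ball (g z) ρ) = m (ball z ρ) := by
  induction hg using Subgroup.closure_induction with
  | mem g hg =>
    intro z ρ
    conv_lhs => rw [← hS g hg]
    rw [Measure.map_apply g.continuous.measurable measurableSet_ball,
      IsometryEquiv.preimage_ball, IsometryEquiv.symm_apply_apply]
  | one => intro z ρ; rfl
  | mul g h _ _ ihg ihh =>
    intro z ρ
    rw [IsometryEquiv.mul_apply, ihg, ihh]
  | inv g _ ih =>
    intro z ρ
    rw [← ih, IsometryEquiv.apply_inv_self]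

/-- **The counting inequality behind the Betti number bound.**
Under the Bishop–Gromov comparison with parameter `λ > 0` and exponent `N - 1`, if
`γ₁, …, γ_b` are `m`-preserving isometries generating a free abelian subgroup with basis
`γ₁, …, γ_b`, displacing `x̄` by more than `D` (nontrivial elements) and at most `2D`
(generators), then for every natural `r`,
`(2r+1)^b · ∫₀^{D/2} sinh(λs)^{N-1} ds ≤ ∫₀^{(2br+1/2)D} sinh(λs)^{N-1} ds`. -/
theorem counting_inequality
    {X : Type*} [MetricSpace X] [MeasurableSpace X] [BorelSpace X]
    (m : Measure X) (lam N : ℝ) (hlam : 0 < lam) (hN : 1 < N)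
    (hBG : ∀ (z : X) (r R : ℝ), 0 < r → r ≤ R →
      m (ball z R) * ENNReal.ofReal (∫ s in (0:ℝ)..r, Real.sinh (lam * s) ^ (N - 1)) ≤
        m (ball z r) * ENNReal.ofReal (∫ s in (0:ℝ)..R, Real.sinh (lam * s) ^ (N - 1)))
    (hpos : ∀ (z : X) (r : ℝ), 0 < r → 0 < m (ball z r))
    (hfin : ∀ (z : X) (r : ℝ), 0 < r → m (ball z r) < ⊤)
    (D : ℝ) (hD : 0 < D) (xb : X) (b : ℕ) (γ : Fin b → X ≃ᵢ X)
    (hmp : ∀ i, Measure.map (γ i) m = m)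
    (Γ' : Subgroup (X ≃ᵢ X)) (hΓ' : Γ' = Subgroup.closure (Set.range γ))
    (hbasis : ∀ g ∈ Γ', ∃! l : Fin b → ℤ, (List.ofFn fun i => γ i ^ l i).prod = g)
    (hlow : ∀ g ∈ Γ', g ≠ 1 → D < dist (g xb) xb)
    (hupp : ∀ i, dist (γ i xb) xb ≤ 2 * D) :
    ∀ r : ℕ,
      (2 * (r : ℝ) + 1) ^ b * ∫ s in (0:ℝ)..(D / 2), Real.sinh (lam * s) ^ (N - 1) ≤
        ∫ s in (0:ℝ)..((2 * (b : ℝ) * (r : ℝ) + 1 / 2) * D), Real.sinh (lam * s) ^ (N - 1) := by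
  intro r
  set I : ℝ → ℝ := fun R => ∫ s in (0:ℝ)..R, Real.sinh (lam * s) ^ (N - 1) with hI
  set R : ℝ := (2 * (b : ℝ) * (r : ℝ) + 1 / 2) * D with hR
  change (2 * (r : ℝ) + 1) ^ b * I (D / 2) ≤ I R
  have hbr : 0 ≤ 2 * (b : ℝ) * r * D := by positivity
  have hDR : D / 2 ≤ R := by rw [hR]; linarith
  have hR0 : 0 ≤ R := by linarith
  have hIR : 0 ≤ I R := intervalIntegral.integral_nonneg hR0 fun s hs =>
    Real.rpow_nonneg (Real.sinh_nonneg_iff.2 (mul_nonneg hlam.le hs.1)) _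
  set G : (Fin b → ℤ) → (X ≃ᵢ X) := fun l => (List.ofFn fun i => γ i ^ l i).prod with hG
  have hGmem : ∀ l, G l ∈ Γ' := by
    intro l
    refine Subgroup.list_prod_mem _ fun g hg => ?_
    obtain ⟨i, rfl⟩ := List.mem_ofFn.1 hg
    rw [hΓ']
    exact Subgroup.zpow_mem _ (Subgroup.subset_closure (Set.mem_range_self i)) _
  have hGinj : Function.Injective G := fun l l' h =>
    (hbasis (G l') (hGmem l')).unique h rfl
  let S : Finset (Fin b → ℤ) := Fintype.piFinset fun _ => Finset.Icc (-(r : ℤ)) r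
  have hcard : S.card = (2 * r + 1) ^ b := by
    have h1 : ((r : ℤ) + 1 - -(r : ℤ)).toNat = 2 * r + 1 := by omega
    simp only [S, Fintype.card_piFinset, Int.card_Icc, h1, Finset.prod_const, Finset.card_univ,
      Fintype.card_fin]
  have hmeas : ∀ l, m (ball (G l xb) (D / 2)) = m (ball xb (D / 2)) := fun l =>
    measure_ball_of_mem_closure m (Set.range γ) (by rintro _ ⟨i, rfl⟩; exact hmp i) (G l)
      (hΓ' ▸ hGmem l) xb (D / 2)
  have hdisj : (S : Set (Fin b → ℤ)).PairwiseDisjoint fun l => ball (G l xb) (D / 2) := by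
    intro l _ l' _ hne
    apply ball_disjoint_ball
    have h1 := hlow ((G l')⁻¹ * G l) (Γ'.mul_mem (Γ'.inv_mem (hGmem l')) (hGmem l))
      (fun h => hne (hGinj (inv_mul_eq_one.1 h).symm))
    rw [← (G l').dist_eq, IsometryEquiv.mul_apply, IsometryEquiv.apply_inv_self] at h1
    linarith
  have hsub : ∀ l ∈ S, ball (G l xb) (D / 2) ⊆ ball xb R := by
    intro l hl
    apply ball_subset_ball'
    have h1 : dist (G l xb) xb ≤ b * (r * (2 * D)) := by
      have := dist_prod_le xb (r * (2 * D)) (List.ofFn fun i => γ i ^ l i) (by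
        intro g hg
        obtain ⟨i, rfl⟩ := List.mem_ofFn.1 hg
        exact dist_zpow_le xb (2 * D) (by positivity) (γ i) (hupp i) r (l i)
          (Fintype.mem_piFinset.1 hl i))
      rwa [List.length_ofFn] at this
    rw [hR]
    linarith
  have hvol : ((2 * r + 1 : ℕ) ^ b : ENNReal) * m (ball xb (D / 2)) ≤ m (ball xb R) := by
    calc ((2 * r + 1 : ℕ) ^ b : ENNReal) * m (ball xb (D / 2))
        = ∑ l ∈ S, m (ball (G l xb) (D / 2)) := by
          simp only [hmeas, Finset.sum_const, hcard, nsmul_eq_mul]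
          push_cast
          rfl
      _ = m (⋃ l ∈ S, ball (G l xb) (D / 2)) :=
          (measure_biUnion_finset hdisj fun _ _ => measurableSet_ball).symm
      _ ≤ m (ball xb R) := measure_mono (Set.iUnion₂_subset hsub)
  have hD2 : 0 < D / 2 := by positivity
  have hmul : m (ball xb (D / 2)) * (((2 * r + 1 : ℕ) ^ b : ENNReal) * ENNReal.ofReal (I (D / 2)))
      ≤ m (ball xb (D / 2)) * ENNReal.ofReal (I R) := by
    refine le_trans ?_ (hBG xb (D / 2) R hD2 hDR)
    rw [← mul_assoc, mul_comm (m _)]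
    gcongr
  have hfinal := (ENNReal.mul_le_mul_iff_right (hpos xb _ hD2).ne' (hfin xb _ hD2).ne).1 hmul
  have hcast : ((2 * r + 1 : ℕ) ^ b : ENNReal) = ENNReal.ofReal ((2 * (r : ℝ) + 1) ^ b) := by
    rw [ENNReal.ofReal_pow (by positivity), ← ENNReal.ofReal_natCast]
    push_cast
    rfl
  rw [hcast, ← ENNReal.ofReal_mul (by positivity)] at hfinal
  exact (ENNReal.ofReal_le_ofReal_iff hIR).1 hfinal
end

section
/- Let (X̄,d) be a proper geodesic metric space and let Γ be a finitely generated abelian group acting on X̄ by isometries such that (i) for every z ∈ X̄ and every R > 0 the set {γ ∈ Γ : d(γ·z, z) ≤ R} is finite, and (ii) there exists D > 0 such that for all y, y' ∈ X̄ there is γ ∈ Γ with d(γ·y, y') ≤ D. Let s be the torsion-free rank of Γ (so Γ is isomorphic to ℤ^s times a finite abelian group). Then for every integer k ≥ 1 and every x̄ ∈ X̄ there exist γ̃₁,…,γ̃_s ∈ Γ such that the subgroup Γ' they generate is free abelian with basis γ̃₁,…,γ̃_s, has finite index in Γ, satisfies d(γ̃·x̄, x̄) > kD for every nontrivial γ̃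 ∈ Γ', and satisfies d(γ̃ᵢ·x̄, x̄) ≤ 2kD for each i = 1,…,s. -/
/-!
The group `Γ` is generated by the elements moving `x̄` by at most `2D`: subdivide a geodesic from
`x̄` to `g x̄`, choose an orbit point within `D` of each subdivision point, and use that the
displacements are discrete (`closure_displacement_le_eq_top`). Let `φ : Γ → ℤ ^ s` be the
projection, whose kernel is finite. Some `s` of these generators have linearly independent images
under `φ`; any such family is a basis of a free abelian subgroup of finite index
(`prod_zpow_injective`, `finiteIndex_closure`).

Call a family of `s` elements admissible if its images under `φ` are linearly independent and its
members move `x̄` by at most `2kD`. Only finitely many elements of `Γ` move `x̄` by at most `kD`,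
so some admissible family `v` spans a subgroup containing the fewest of them. If that subgroup
contained a nontrivial `g = ∏ vᵢ ^ mᵢ` of displacement at most `kD`, with `m_j ≠ 0` say, then some
power `g ^ n` with `n ≥ 2` would have displacement at most `2kD` (`exists_pow_displacement`; a
power `n = 2 ^ a` does). Replacing `v_j` by `g ^ n` gives an admissible family whose span lies in
the span of `v` but no longer contains `g` (`linearIndependent_update`, `closure_update_le`,
`notMem_closure_update`), which contradicts minimality.
-/

open Metric

/-- A metric space is geodesic if every pair of points is joined by a length-minimising
geodesic. -/
def IsGeodesicSpace (X : Type*) [MetricSpace X] : Prop :=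
  ∀ x y : X, ∃ f : ℝ → X, f 0 = x ∧ f (dist x y) = y ∧
    ∀ s ∈ Set.Icc (0 : ℝ) (dist x y), ∀ t ∈ Set.Icc (0 : ℝ) (dist x y),
      dist (f s) (f t) = |s - t|

/-! ### Displacements under the isometric action -/

section ShortGenerators

variable {X : Type*} [MetricSpace X] {Γ : Type*} [CommGroup Γ] [MulAction Γ X]

lemma dist_inv_mul_smul (hiso : ∀ γ : Γ, Isometry (fun z : X => γ • z)) (a b : Γ) (x : X) :
    dist ((a⁻¹ * b) • x) x = dist (b • x) (a • x) := by
  rw [← (hiso a).dist_eq ((a⁻¹ * b) • x) x]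
  simp [smul_smul]

/-- Proper discontinuity makes the set of displacements discrete, which is what allows the bound
`2 * D` here, rather than the bound `2 * D + δ` coming from a subdivision of mesh `δ`. -/
lemma closure_displacement_le_eq_top (hgeo : IsGeodesicSpace X)
    (hiso : ∀ γ : Γ, Isometry (fun z : X => γ • z))
    (hpd : ∀ (z : X) (R : ℝ), 0 < R → {γ : Γ | dist (γ • z) z ≤ R}.Finite)
    (D : ℝ) (hD : 0 < D) (hcc : ∀ y y' : X, ∃ γ : Γ, dist (γ • y) y' ≤ D) (x : X) :
    Subgroup.closure {γ : Γ | dist (γ • x) x ≤ 2 * D} = ⊤ := by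
  obtain ⟨δ, hδ, hgap⟩ : ∃ δ : ℝ, 0 < δ ∧
      ∀ γ : Γ, dist (γ • x) x ≤ 2 * D + δ → dist (γ • x) x ≤ 2 * D := by
    have hev : ∀ᶠ δ : ℝ in nhdsWithin 0 (Set.Ioi 0),
        ∀ γ ∈ {γ : Γ | dist (γ • x) x ≤ 2 * D + 1},
          dist (γ • x) x ≤ 2 * D + δ → dist (γ • x) x ≤ 2 * D := by
      rw [Filter.eventually_all_finite (hpd x (2 * D + 1) (by positivity))]
      intro γ _
      by_cases h : dist (γ • x) x ≤ 2 * D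
      · exact Filter.Eventually.of_forall fun _ _ => h
      · have hpos : 0 < dist (γ • x) x - 2 * D := by linarith
        filter_upwards [Ioo_mem_nhdsGT hpos] with δ hδ h'
        linarith [hδ.2]
    obtain ⟨δ, h1, h2⟩ := (hev.and (Ioo_mem_nhdsGT (zero_lt_one' ℝ))).exists
    exact ⟨δ, h2.1, fun γ hγ => h1 γ (by change dist (γ • x) x ≤ 2 * D + 1; linarith [h2.2]) hγ⟩
  set S := {γ : Γ | dist (γ • x) x ≤ 2 * D} with hS
  rw [eq_top_iff]
  intro g _
  obtain ⟨f, hf0, hfL, hf⟩ := hgeo x (g • x)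
  set L := dist x (g • x) with hL
  have hL0 : 0 ≤ L := dist_nonneg
  have step : ∀ a b : Γ, a ∈ Subgroup.closure S → dist (b • x) (a • x) ≤ 2 * D + δ →
      b ∈ Subgroup.closure S := by
    intro a b ha hab
    have hmem : a⁻¹ * b ∈ S := hgap _ (by rwa [dist_inv_mul_smul hiso])
    simpa using mul_mem ha (Subgroup.subset_closure hmem)
  have main : ∀ n : ℕ, ∃ a ∈ Subgroup.closure S, dist (a • x) (f (min (n * δ) L)) ≤ D := by
    intro n
    induction n with
    | zero => exact ⟨1, one_mem _, by simp [hL0, hf0, hD.le]⟩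
    | succ n ih =>
      obtain ⟨a, ha, had⟩ := ih
      obtain ⟨b, hb⟩ := hcc x (f (min ((n + 1 : ℕ) * δ) L))
      refine ⟨b, step a b ha ?_, hb⟩
      have hmem : ∀ m : ℕ, min (m * δ) L ∈ Set.Icc (0 : ℝ) L := fun m =>
        ⟨le_min (by positivity) hL0, min_le_right _ _⟩
      have hd : dist (f (min ((n + 1 : ℕ) * δ) L)) (f (min (n * δ) L)) ≤ δ := by
        rw [hf _ (hmem _) _ (hmem _)]
        refine (abs_min_sub_min_le_max _ _ _ _).trans ?_
        push_cast
        simp [add_mul, abs_of_pos hδ, hδ.le]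
      have t1 := dist_triangle4 (b • x) (f (min ((n + 1 : ℕ) * δ) L)) (f (min (n * δ) L)) (a • x)
      rw [dist_comm (f (min (n * δ) L)) (a • x)] at t1
      linarith
  obtain ⟨n, hn⟩ := exists_nat_ge (L / δ)
  obtain ⟨a, ha, had⟩ := main n
  rw [min_eq_right ((div_le_iff₀ hδ).1 hn), hfL] at had
  refine step a g ha ?_
  rw [dist_comm]
  linarith

/-- Doubling multiplies the displacement by at most two, so the first power `γ ^ 2 ^ m` which
moves `x` by more than `r` moves it by at most `2 * r`; here `m ≠ 0` because `γ` itself is short. -/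
lemma exists_pow_displacement (hiso : ∀ γ : Γ, Isometry (fun z : X => γ • z))
    (hpd : ∀ (z : X) (R : ℝ), 0 < R → {γ : Γ | dist (γ • z) z ≤ R}.Finite)
    (x : X) (r : ℝ) (hr : 0 < r) (γ : Γ) (hγ : ¬ IsOfFinOrder γ) (hγr : dist (γ • x) x ≤ r) :
    ∃ n : ℕ, 2 ≤ n ∧ dist (γ ^ n • x) x ≤ 2 * r := by
  have hex : ∃ m : ℕ, r < dist (γ ^ 2 ^ m • x) x := by
    by_contra! hcon
    refine Set.infinite_of_injective_forall_mem (f := fun m : ℕ => γ ^ 2 ^ m) ?_ hcon (hpd x r hr)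
    exact (injective_pow_iff_not_isOfFinOrder.2 hγ).comp (Nat.pow_right_injective le_rfl)
  classical
  have hspec := Nat.find_spec hex
  have hmin := fun k => Nat.find_min (m := k) hex
  generalize Nat.find hex = m at hspec hmin
  cases m with
  | zero => exact absurd hγr (by simpa using hspec)
  | succ m =>
    refine ⟨2 ^ (m + 1), by rw [pow_succ]; have := Nat.one_le_two_pow (n := m); omega, ?_⟩
    have h1 : dist (γ ^ 2 ^ m • x) x ≤ r := not_lt.1 (hmin m (Nat.lt_succ_self m))
    have h2 : γ ^ 2 ^ (m + 1) = γ ^ 2 ^ m * γ ^ 2 ^ m := by rw [pow_succ, mul_two, pow_add]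
    rw [h2, mul_smul]
    have h3 := dist_triangle (γ ^ 2 ^ m • γ ^ 2 ^ m • x) (γ ^ 2 ^ m • x) x
    rw [(hiso (γ ^ 2 ^ m)).dist_eq] at h3
    linarith

end ShortGenerators

/-! ### Families with linearly independent images in `ℤ ^ s` -/

section Lattice

variable {Γ : Type*} [CommGroup Γ] {s : ℕ} (φ : Γ →* Multiplicative (Fin s → ℤ))

lemma toAdd_map_prod_zpow (v : Fin s → Γ) (l : Fin s → ℤ) :
    (φ (∏ i, v i ^ l i)).toAdd = ∑ i, l i • (φ (v i)).toAdd := by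
  simp [map_prod, toAdd_prod]

lemma prod_zpow_injective {v : Fin s → Γ}
    (hv : LinearIndependent ℤ fun i => (φ (v i)).toAdd) :
    Function.Injective fun l : Fin s → ℤ => ∏ i, v i ^ l i := by
  intro l l' h
  have h' := congrArg (fun g => (φ g).toAdd) h
  simp only [toAdd_map_prod_zpow] at h'
  funext i
  have := Fintype.linearIndependent_iff.1 hv (fun i => l i - l' i)
    (by simp only [sub_smul, Finset.sum_sub_distrib, h', sub_self]) i
  linarith

lemma not_isOfFinOrder_of_mem_closure {v : Fin s → Γ}
    (hv : LinearIndependent ℤ fun i => (φ (v i)).toAdd) {g : Γ}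
    (hg : g ∈ Subgroup.closure (Set.range v)) (hg1 : g ≠ 1) : ¬ IsOfFinOrder g := by
  obtain ⟨l, rfl⟩ := Subgroup.exists_of_mem_closure_range v g hg
  rw [isOfFinOrder_iff_pow_eq_one]
  rintro ⟨n, hn, h⟩
  apply hg1
  have h0 : (fun i => (n : ℤ) * l i) = 0 := by
    apply prod_zpow_injective φ hv
    simpa [mul_comm, zpow_mul, Finset.prod_pow] using h
  have hl : l = 0 := by
    funext i
    have := congrFun h0 i
    simpa [hn.ne'] using this
  simp [hl]

/-- The quotient is torsion: `s + 1` vectors in `ℤ ^ s` are linearly dependent, so a nonzero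
multiple of each element agrees, up to the torsion kernel of `φ`, with an element of the span. -/
lemma finiteIndex_closure [Group.FG Γ] (hker : ∀ g, φ g = 1 → IsOfFinOrder g) {v : Fin s → Γ}
    (hv : LinearIndependent ℤ fun i => (φ (v i)).toAdd) :
    (Subgroup.closure (Set.range v)).FiniteIndex := by
  refine Subgroup.finiteIndex_iff_finite_quotient.mpr <|
    CommGroup.finite_of_fg_isMulTorsion _ ?_
  intro q
  obtain ⟨g, rfl⟩ := QuotientGroup.mk_surjective q
  obtain ⟨n, hn, hmem⟩ : ∃ n : ℤ, n ≠ 0 ∧ ∃ l : Fin s → ℤ,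
      φ (g ^ n * ∏ i, v i ^ l i) = 1 := by
    have hdep : ¬ LinearIndependent ℤ
        (fun o : Option (Fin s) => o.elim (φ g).toAdd fun i => (φ (v i)).toAdd) := by
      intro h
      have := h.fintype_card_le_finrank
      simp at this
    rw [Fintype.not_linearIndependent_iff] at hdep
    obtain ⟨c, hc, o, ho⟩ := hdep
    simp only [Fintype.sum_option, Option.elim] at hc
    refine ⟨c none, fun h0 => ?_, fun i => c (some i), ?_⟩
    · rw [h0, zero_smul, zero_add] at hc
      have := Fintype.linearIndependent_iff.1 hv _ hc
      cases o with
      | none => exact ho h0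
      | some i => exact ho (this i)
    · apply Multiplicative.toAdd.injective
      rw [map_mul, toAdd_mul, toAdd_map_prod_zpow]
      simpa using hc
  obtain ⟨l, hl⟩ := hmem
  obtain ⟨m, hm, h⟩ := isOfFinOrder_iff_pow_eq_one.1 (hker _ hl)
  rw [isOfFinOrder_iff_zpow_eq_one]
  refine ⟨n * m, mul_ne_zero hn (by exact_mod_cast hm.ne'), ?_⟩
  rw [← QuotientGroup.mk_zpow, QuotientGroup.eq_one_iff, zpow_mul, zpow_natCast]
  rw [mul_pow] at h
  rw [eq_inv_of_mul_eq_one_left h]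
  exact inv_mem (pow_mem (prod_mem fun i _ =>
    zpow_mem (Subgroup.subset_closure (Set.mem_range_self i)) _) _)

lemma exists_linearIndependent_of_closure_eq_top (hφ : Function.Surjective φ) {S : Set Γ}
    (hS : Subgroup.closure S = ⊤) :
    ∃ v : Fin s → Γ, (∀ i, v i ∈ S) ∧ LinearIndependent ℤ fun i => (φ (v i)).toAdd := by
  set w : Γ → Fin s → ℚ := fun g i => ((φ g).toAdd i : ℚ) with hw
  have hspan : Submodule.span ℚ (w '' S) = ⊤ := by
    have hall : ∀ g : Γ, w g ∈ Submodule.span ℚ (w '' S) := by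
      intro g
      have hg : g ∈ Subgroup.closure S := hS ▸ Subgroup.mem_top g
      induction hg using Subgroup.closure_induction with
      | mem x hx => exact Submodule.subset_span ⟨x, hx, rfl⟩
      | one =>
        have : w 1 = 0 := by funext i; simp [hw]
        rw [this]; exact zero_mem _
      | mul x y _ _ hx hy =>
        have : w (x * y) = w x + w y := by funext i; simp [hw]
        rw [this]; exact add_mem hx hy
      | inv x _ hx =>
        have : w x⁻¹ = -w x := by funext i; simp [hw]
        rw [this]; exact neg_mem hx
    rw [eq_top_iff, ← (Pi.basisFun ℚ (Fin s)).span_eq, Submodule.span_le]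
    rintro _ ⟨i, rfl⟩
    obtain ⟨g, hg⟩ := hφ (Multiplicative.ofAdd (Pi.single i 1))
    have hgi : Pi.basisFun ℚ (Fin s) i = w g := by
      funext j
      simp [hw, hg, Pi.single_apply]
    rw [hgi]
    exact hall g
  obtain ⟨b, hbS, hbspan, hb⟩ := exists_linearIndependent ℚ (w '' S)
  rw [hspan] at hbspan
  let B : Module.Basis b ℚ (Fin s → ℚ) := Module.Basis.mk hb (by simp [hbspan])
  let ε : Fin s ≃ b := (Pi.basisFun ℚ (Fin s)).indexEquiv B
  choose u huS hu using fun i => hbS (ε i).2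
  refine ⟨u, huS, ?_⟩
  have hli : LinearIndependent ℚ fun i => w (u i) := by
    simp only [hu]
    exact hb.comp ε ε.injective
  rw [Fintype.linearIndependent_iff] at hli ⊢
  intro l hl i
  have := hli (fun i => (l i : ℚ)) (by
    funext j
    have := congrFun hl j
    simp only [Finset.sum_apply, Pi.smul_apply, smul_eq_mul, Pi.zero_apply, hw] at this ⊢
    exact_mod_cast this) i
  exact_mod_cast this

/-- Coordinates, with respect to `v`, of a combination of the family obtained from `v` by
replacing `v j` with the `n`-th power of `∏ i, v i ^ m i`. -/
lemma sum_smul_update (v : Fin s → Γ) (m : Fin s → ℤ) (j : Fin s) (n : ℕ) (c : Fin s → ℤ) :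
    ∑ i, c i • (φ (Function.update v j ((∏ i, v i ^ m i) ^ n) i)).toAdd =
      ∑ i, ((if i = j then 0 else c i) + c j * n * m i) • (φ (v i)).toAdd := by
  simp only [add_smul, Finset.sum_add_distrib, mul_smul, ← Finset.smul_sum]
  rw [← toAdd_map_prod_zpow φ v m, ← Finset.add_sum_erase _ _ (Finset.mem_univ j),
    ← Finset.add_sum_erase _ (fun i => (if i = j then 0 else c i) • _) (Finset.mem_univ j)]
  simp only [Function.update_self, map_pow, toAdd_pow, if_true, zero_smul, zero_add]
  rw [add_comm, natCast_zsmul]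
  congr 1
  refine Finset.sum_congr rfl fun i hi => ?_
  rw [if_neg (Finset.ne_of_mem_erase hi), Function.update_of_ne (Finset.ne_of_mem_erase hi)]

lemma linearIndependent_update {v : Fin s → Γ}
    (hv : LinearIndependent ℤ fun i => (φ (v i)).toAdd) {m : Fin s → ℤ} {j : Fin s}
    (hj : m j ≠ 0) {n : ℕ} (hn : 2 ≤ n) :
    LinearIndependent ℤ
      fun i => (φ (Function.update v j ((∏ i, v i ^ m i) ^ n) i)).toAdd := by
  rw [Fintype.linearIndependent_iff]
  intro c hc
  rw [sum_smul_update] at hc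
  have h := Fintype.linearIndependent_iff.1 hv _ hc
  have hn0 : n ≠ 0 := by omega
  have hcj : c j = 0 := by simpa [hj, hn0] using h j
  intro i
  by_cases hij : i = j
  · rw [hij, hcj]
  · simpa [hij, hcj] using h i

lemma notMem_closure_update {v : Fin s → Γ}
    (hv : LinearIndependent ℤ fun i => (φ (v i)).toAdd) {m : Fin s → ℤ} {j : Fin s}
    (hj : m j ≠ 0) {n : ℕ} (hn : 2 ≤ n) :
    ∏ i, v i ^ m i ∉
      Subgroup.closure (Set.range (Function.update v j ((∏ i, v i ^ m i) ^ n))) := by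
  intro hmem
  obtain ⟨c, hc⟩ := Subgroup.exists_of_mem_closure_range _ _ hmem
  have h := congrArg (fun g => (φ g).toAdd) hc
  simp only [toAdd_map_prod_zpow] at h
  rw [sum_smul_update] at h
  have h0 := Fintype.linearIndependent_iff.1 hv
    (fun i => m i - ((if i = j then 0 else c i) + c j * n * m i))
    (by simp only [sub_smul, Finset.sum_sub_distrib]; rw [← h, sub_self]) j
  have h1 : (1 - c j * n) * m j = 0 := by simp at h0; linarith
  have h2 : c j * n = 1 := by
    rcases mul_eq_zero.1 h1 with h | h
    · linarith
    · exact absurd h hj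
  have h3 := Int.eq_one_or_neg_one_of_mul_eq_one' h2
  omega

lemma closure_update_le (v : Fin s → Γ) (m : Fin s → ℤ) (j : Fin s) (n : ℕ) :
    Subgroup.closure (Set.range (Function.update v j ((∏ i, v i ^ m i) ^ n))) ≤
      Subgroup.closure (Set.range v) := by
  have hv : ∀ i, v i ∈ Subgroup.closure (Set.range v) := fun i =>
    Subgroup.subset_closure (Set.mem_range_self i)
  rw [Subgroup.closure_le]
  rintro _ ⟨i, rfl⟩
  by_cases hij : i = j
  · subst hij
    simpa using pow_mem (prod_mem fun i _ => zpow_mem (hv i) (m i)) n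
  · simpa [Function.update_of_ne hij] using hv i

end Lattice

/-! ### The short basis -/

/-- **Gromov's short-basis lemma (Lemma 3.2).**
Let `X̄` be a proper geodesic metric space and `Γ` a finitely generated abelian group acting
on `X̄` by isometries, properly discontinuously (i), and `D`-cocompactly (ii). If `Γ` is
isomorphic to `ℤ^s` times a finite abelian group, then for every `k ≥ 1` and every `x̄`
there exist `γ̃₁, …, γ̃_s ∈ Γ` generating a finite-index free abelian subgroup `Γ'` with
basis `γ̃₁, …, γ̃_s`, such that `d(γ̃ x̄, x̄) > kD` for all nontrivial `γ̃ ∈ Γ'` and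
`d(γ̃ᵢ x̄, x̄) ≤ 2kD` for each `i`. -/
theorem gromov_short_basis
    {X : Type*} [MetricSpace X] [ProperSpace X] (hgeo : IsGeodesicSpace X)
    {Γ : Type*} [CommGroup Γ] (hfg : Group.FG Γ)
    [MulAction Γ X] (hiso : ∀ γ : Γ, Isometry (fun z : X => γ • z))
    (hpd : ∀ (z : X) (R : ℝ), 0 < R → {γ : Γ | dist (γ • z) z ≤ R}.Finite)
    (D : ℝ) (hD : 0 < D) (hcc : ∀ y y' : X, ∃ γ : Γ, dist (γ • y) y' ≤ D)
    (s : ℕ) (F : Type*) [CommGroup F] [Finite F]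
    (e : Γ ≃* Multiplicative (Fin s → ℤ) × F) :
    ∀ k : ℕ, 1 ≤ k → ∀ xb : X, ∃ γt : Fin s → Γ,
      (∀ g ∈ Subgroup.closure (Set.range γt),
        ∃! l : Fin s → ℤ, (List.ofFn fun i => γt i ^ l i).prod = g) ∧
      (Subgroup.closure (Set.range γt)).FiniteIndex ∧
      (∀ g ∈ Subgroup.closure (Set.range γt), g ≠ 1 → (k : ℝ) * D < dist (g • xb) xb) ∧
      (∀ i, dist (γt i • xb) xb ≤ 2 * (k : ℝ) * D) := by
  intro k hk x
  have hk1 : (1 : ℝ) ≤ k := by exact_mod_cast hk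
  have hkD : 0 < (k : ℝ) * D := by positivity
  let φ : Γ →* Multiplicative (Fin s → ℤ) := (MonoidHom.fst _ F).comp e.toMonoidHom
  have hφ : Function.Surjective φ := Prod.fst_surjective.comp e.surjective
  have hker : ∀ g, φ g = 1 → IsOfFinOrder g := by
    intro g hg
    rw [← e.injective.isOfFinOrder_iff (f := e.toMonoidHom)]
    obtain ⟨n, hn, h⟩ := isOfFinOrder_iff_pow_eq_one.1 (isOfFinOrder_of_finite (e g).2)
    exact isOfFinOrder_iff_pow_eq_one.2 ⟨n, hn, Prod.ext
      (by change φ g ^ n = 1; rw [hg, one_pow]) h⟩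
  let good : Set (Fin s → Γ) := {v | LinearIndependent ℤ (fun i => (φ (v i)).toAdd) ∧
    ∀ i, dist (v i • x) x ≤ 2 * (k : ℝ) * D}
  let short : (Fin s → Γ) → Set Γ := fun v =>
    {g | g ∈ Subgroup.closure (Set.range v) ∧ dist (g • x) x ≤ k * D}
  have hfin : ∀ v, (short v).Finite := fun v => (hpd x _ hkD).subset fun g hg => hg.2
  have hne : good.Nonempty := by
    obtain ⟨v, hv, hli⟩ := exists_linearIndependent_of_closure_eq_top φ hφ
      (closure_displacement_le_eq_top hgeo hiso hpd D hD hcc x)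
    refine ⟨v, hli, fun i => (hv i).trans ?_⟩
    nlinarith
  -- Among the admissible families, take one whose span has the fewest short elements.
  obtain ⟨v, ⟨hli, hdist⟩, hmin⟩ := exists_minimalFor_of_wellFoundedLT (· ∈ good)
    (fun v => (short v).ncard) hne
  refine ⟨v, ?_, finiteIndex_closure φ hker hli, ?_, hdist⟩
  · intro g hg
    obtain ⟨l, rfl⟩ := Subgroup.exists_of_mem_closure_range v g hg
    simp only [List.prod_ofFn]
    exact ⟨l, rfl, fun l' h => prod_zpow_injective φ hli h⟩
  · intro g hg hg1
    by_contra! hshort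
    obtain ⟨n, hn, hnd⟩ := exists_pow_displacement hiso hpd x _ hkD g
      (not_isOfFinOrder_of_mem_closure φ hli hg hg1) hshort
    obtain ⟨m, rfl⟩ := Subgroup.exists_of_mem_closure_range v g hg
    obtain ⟨j, hj⟩ : ∃ j, m j ≠ 0 := by
      by_contra! h
      exact hg1 (by simp [h])
    set v' := Function.update v j ((∏ i, v i ^ m i) ^ n) with hv'
    have hgood : v' ∈ good := by
      refine ⟨linearIndependent_update φ hli hj hn, fun i => ?_⟩
      by_cases hij : i = j
      · subst hij
        rw [hv', Function.update_self, mul_assoc]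
        exact hnd
      · rw [hv', Function.update_of_ne hij]
        exact hdist i
    have hlt : (short v').ncard < (short v).ncard := by
      refine Set.ncard_lt_ncard ⟨fun h hh => ⟨closure_update_le v m j n hh.1, hh.2⟩, fun hsub => ?_⟩
        (hfin v)
      exact notMem_closure_update φ hli hj hn (hsub ⟨hg, hshort⟩).1
    exact absurd (hmin hgood hlt.le) (not_le.2 hlt)
end

section
/- For each n ∈ ℕ let (X_n, d_n, x_n) be a pointed metric space and Γ_n a group acting on X_n by isometries, and let (X_∞, d_∞, x_∞) be a pointed metric space with Γ_∞ a group acting on X_∞ by isometries. Suppose there is a sequence ε_n → 0 with ε_n ∈ (0,1), and for each n maps f_n : B(x_∞, ε_n⁻¹) → X_n and φ_n : {γ ∈ Γ_∞ : d_∞(γ·x_∞, x_∞) < ε_n⁻¹} → Γ_n satisfying: (3) |d_n(f_n(u), f_n(v)) − d_∞(u,v)| < ε_n for all u, v ∈ B(x_∞, ε_n⁻¹); and (4) d_n(f_n(γ·u), φ_n(γ)·f_n(u)) < ε_n whenever γ is in the domain of φ_n and u, γ·u ∈ B(x_∞, ε_n⁻¹). If every Γ_n is abelian, then Γ_∞ is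 abelian. -/
open Metric Filter Topology

/-!
Fix `a, b` in the limit group and a point `z`. For large `n` the finitely many points involved
all lie in the ball of radius `(ε n)⁻¹`, so two applications of almost-equivariance put
`f n (a (b z))` within `2 ε n` of `φ n a (φ n b (f n z))`, and likewise with `a` and `b` exchanged.
The two image points coincide because `Γ n` is abelian, and `f n` distorts distances by less than
`ε n`; hence `dist (a (b z)) (b (a z)) < 5 ε n → 0`.
-/

/-- **Lemma 6.1: abelianness passes to equivariant GH limits.**
If pointed metric spaces `(X_n, x_n)` with isometry groups `Γ_n` admit `ε_n`-equivariant
pointed GH approximations from `(X_∞, x_∞, Γ_∞)` (conditions (3) and (4) of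
Definition 2.2) with `ε_n → 0`, `ε_n ∈ (0,1)`, and every `Γ_n` is abelian, then `Γ_∞`
is abelian. -/
theorem abelian_of_equivariant_limit
    {X : ℕ → Type*} [∀ n, MetricSpace (X n)] (x : ∀ n, X n)
    (Γ : ∀ n, Subgroup (X n ≃ᵢ X n))
    {Xoo : Type*} [MetricSpace Xoo] (xoo : Xoo) (Γoo : Subgroup (Xoo ≃ᵢ Xoo))
    (ε : ℕ → ℝ) (hε : ∀ n, ε n ∈ Set.Ioo (0 : ℝ) 1)
    (hε0 : Tendsto ε atTop (𝓝 0))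
    (f : ∀ n, Xoo → X n) (φ : ∀ n, Γoo → Γ n)
    (h3 : ∀ n, ∀ u ∈ ball xoo (ε n)⁻¹, ∀ v ∈ ball xoo (ε n)⁻¹,
      |dist (f n u) (f n v) - dist u v| < ε n)
    (h4 : ∀ n, ∀ γ : Γoo, dist ((γ : Xoo ≃ᵢ Xoo) xoo) xoo < (ε n)⁻¹ →
      ∀ u ∈ ball xoo (ε n)⁻¹, (γ : Xoo ≃ᵢ Xoo) u ∈ ball xoo (ε n)⁻¹ →
        dist (f n ((γ : Xoo ≃ᵢ Xoo) u)) (((φ n γ : X n ≃ᵢ X n)) (f n u)) < ε n)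
    (habel : ∀ n, ∀ a b : Γ n, a * b = b * a) :
    ∀ a b : Γoo, a * b = b * a := by
  intro a b
  have hinv : Tendsto (fun n => (ε n)⁻¹) atTop atTop :=
    tendsto_inv_nhdsGT_zero.comp
      (tendsto_nhdsWithin_iff.2 ⟨hε0, Eventually.of_forall fun n => (hε n).1⟩)
  have hball (w : Xoo) : ∀ᶠ n in atTop, w ∈ ball xoo (ε n)⁻¹ :=
    hinv.eventually_gt_atTop (dist w xoo)
  have key (c d : Γoo) (z : Xoo) : ∀ᶠ n in atTop,
      dist (f n (c.1 (d.1 z))) ((φ n c).1 ((φ n d).1 (f n z))) < 2 * ε n := by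
    filter_upwards [hball z, hball (d.1 z), hball (c.1 (d.1 z)), hball (c.1 xoo),
      hball (d.1 xoo)] with n hz hdz hcdz hc hd
    have h₁ := h4 n c hc _ hdz hcdz
    have h₂ := h4 n d hd _ hz hdz
    rw [← (φ n c).1.dist_eq] at h₂
    linarith [dist_triangle (f n (c.1 (d.1 z))) ((φ n c).1 (f n (d.1 z)))
      ((φ n c).1 ((φ n d).1 (f n z)))]
  refine Subtype.ext (IsometryEquiv.ext fun z => ?_)
  change a.1 (b.1 z) = b.1 (a.1 z)
  have hlim : Tendsto (fun n => 5 * ε n) atTop (𝓝 0) := by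
    simpa using hε0.const_mul 5
  refine dist_le_zero.1 (ge_of_tendsto hlim ?_)
  filter_upwards [key a b z, key b a z, hball (a.1 (b.1 z)), hball (b.1 (a.1 z))]
    with n hab hba h₁ h₂
  have hcomm : (φ n a).1 ((φ n b).1 (f n z)) = (φ n b).1 ((φ n a).1 (f n z)) :=
    congrArg (fun g : Γ n => g.1 (f n z)) (habel n (φ n a) (φ n b))
  rw [hcomm] at hab
  have hdist := (abs_lt.1 (h3 n _ h₁ _ h₂)).1
  linarith [dist_triangle_right (f n (a.1 (b.1 z))) (f n (b.1 (a.1 z)))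
    ((φ n b).1 ((φ n a).1 (f n z)))]
end

section
/- Let (X, d_X) and (Y, d_Y) be proper geodesic metric spaces, R > 0, x ∈ X, y ∈ Y, ε > 0, and let φ : B_R(x) → B_R(y) be a map such that |d_Y(φ(z), φ(z')) − d_X(z, z')| ≤ ε for all z, z' ∈ B_R(x) and every point of B_R(y) is within distance ε of the image of φ. Let r > 0, x' ∈ X and y' ∈ Y be such that d_Y(φ(x'), y') < ε, the closed ball B̄_r(x') is contained in B_R(x), and the closed ball B̄_r(y') is contained in B_R(y). Then there exists a map ψ : B̄_r(x') → B̄_r(y') such that |d_Y(ψ(z), ψ(z')) − d_X(z, z')| ≤ 5ε for all z, z' ∈ B̄_r(x'), and every point of B̄_r(y') is within distance 7ε of the image of ψ. -/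
/-!
In a geodesic space a point at distance at most `r + a` from `c` can be moved along a geodesic
towards `c` by at most `a` so as to land in `closedBall c r` (`exists_retract`). For `z` in
`closedBall x' r` the point `φ z` is within `r + 2ε` of `y'`; moving it into `closedBall y' r`
defines `ψ z`, with `dist (φ z) (ψ z) ≤ 2ε`, so the distortion grows from `ε` to at most
`ε + 2ε + 2ε`.

For density, `w ∈ closedBall y' r` is `ε`-close to some `φ z` with `dist z x' ≤ r + 3ε`; moving `z`
by at most `3ε` to a point `q` of `closedBall x' r` gives
`dist w (ψ q) ≤ ε + (3ε + ε) + 2ε = 7ε`.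
-/

open Metric

/-- The witness is `p` itself, or the point at distance `r` from `c` on a geodesic
from `c` to `p`. -/
lemma exists_retract {X : Type*} [MetricSpace X] (h : IsGeodesicSpace X) (c p : X) {r a : ℝ}
    (hr : 0 ≤ r) (ha : 0 ≤ a) (hd : dist p c ≤ r + a) :
    ∃ q ∈ closedBall c r, dist p q ≤ a := by
  rcases le_total (dist c p) r with hle | hle
  · exact ⟨p, by rwa [mem_closedBall, dist_comm], by simpa using ha⟩
  · obtain ⟨f, h0, h1, hf⟩ := h c p
    have hrm : r ∈ Set.Icc (0 : ℝ) (dist c p) := ⟨hr, hle⟩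
    refine ⟨f r, ?_, ?_⟩
    · have := hf r hrm 0 ⟨le_rfl, dist_nonneg⟩
      rw [h0, sub_zero, abs_of_nonneg hr] at this
      exact this.le
    · have := hf (dist c p) ⟨dist_nonneg, le_rfl⟩ r hrm
      rw [h1, abs_of_nonneg (sub_nonneg.2 hle)] at this
      rw [this, dist_comm c p]
      linarith

/-- **Restriction of GH approximations (Proposition A.1, Remark A.3).**
An `ε`-GH approximation `φ : B_R(x) → B_R(y)` between balls in proper geodesic spaces
restricts, after recentring at `x'`, `y'` with `d(φ(x'), y') < ε`, to a map
`ψ : B̄_r(x') → B̄_r(y')` with distance distortion at most `5ε` and `7ε`-dense image. -/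
theorem restriction_GH_approximation
    {X Y : Type*} [MetricSpace X] [MetricSpace Y] [ProperSpace X] [ProperSpace Y]
    (hgeoX : IsGeodesicSpace X) (hgeoY : IsGeodesicSpace Y)
    (R : ℝ) (hR : 0 < R) (x : X) (y : Y) (ε : ℝ) (hε : 0 < ε)
    (φ : X → Y)
    (hmaps : ∀ z ∈ ball x R, φ z ∈ ball y R)
    (hdist : ∀ z ∈ ball x R, ∀ z' ∈ ball x R, |dist (φ z) (φ z') - dist z z'| ≤ ε)
    (hsurj : ∀ w ∈ ball y R, ∃ z ∈ ball x R, dist w (φ z) ≤ ε)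
    (r : ℝ) (hr : 0 < r) (x' : X) (y' : Y)
    (hxy' : dist (φ x') y' < ε)
    (hbx : closedBall x' r ⊆ ball x R)
    (hby : closedBall y' r ⊆ ball y R) :
    ∃ ψ : X → Y,
      (∀ z ∈ closedBall x' r, ψ z ∈ closedBall y' r) ∧
      (∀ z ∈ closedBall x' r, ∀ z' ∈ closedBall x' r,
        |dist (ψ z) (ψ z') - dist z z'| ≤ 5 * ε) ∧
      (∀ w ∈ closedBall y' r, ∃ z ∈ closedBall x' r, dist w (ψ z) ≤ 7 * ε) := by
  have hx' : x' ∈ ball x R := hbx (mem_closedBall_self hr.le)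
  have key : ∀ z, ∃ q, z ∈ closedBall x' r → q ∈ closedBall y' r ∧ dist (φ z) q ≤ 2 * ε := by
    intro z
    by_cases hz : z ∈ closedBall x' r
    · have h1 := (abs_le.1 (hdist z (hbx hz) x' hx')).2
      have h2 := dist_triangle (φ z) (φ x') y'
      have h3 := mem_closedBall.1 hz
      obtain ⟨q, hq, hq'⟩ := exists_retract hgeoY y' (φ z) (r := r) (a := 2 * ε) hr.le
        (by linarith) (by linarith)
      exact ⟨q, fun _ => ⟨hq, hq'⟩⟩
    · exact ⟨y', fun h => absurd h hz⟩
  choose ψ hψ using key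
  refine ⟨ψ, fun z hz => (hψ z hz).1, fun z hz z' hz' => ?_, fun w hw => ?_⟩
  · have h1 := abs_le.1 (hdist z (hbx hz) z' (hbx hz'))
    have h2 := (hψ z hz).2
    have h3 := (hψ z' hz').2
    have h4 := dist_triangle4 (φ z) (ψ z) (ψ z') (φ z')
    have h5 := dist_triangle4 (ψ z) (φ z) (φ z') (ψ z')
    rw [dist_comm (ψ z') (φ z')] at h4
    rw [dist_comm (ψ z) (φ z)] at h5
    rw [abs_le]
    constructor <;> linarith
  · obtain ⟨z, hz, hwz⟩ := hsurj w (hby hw)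
    have h1 := (abs_le.1 (hdist z hz x' hx')).1
    have h2 := dist_triangle4 (φ z) w y' (φ x')
    rw [dist_comm (φ z) w, dist_comm y' (φ x')] at h2
    have h3 := mem_closedBall.1 hw
    obtain ⟨q, hq, hzq⟩ := exists_retract hgeoX x' z (r := r) (a := 3 * ε) hr.le
      (by linarith) (by linarith)
    have h4 := (abs_le.1 (hdist z hz q (hbx hq))).2
    have h5 := (hψ q hq).2
    have h6 := dist_triangle4 w (φ z) (φ q) (ψ q)
    exact ⟨q, hq, by linarith⟩
end
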